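/- arXiv:1908.10902 — 2 statements merged into one kernel-verified Lean document; each statement's English description precedes it below -/
import Mathlib

section
/- For all real x, |J₀(x)| ≤ min(1, √(2/(π|x|))), where J₀ is the Bessel function of the first kind of order zero. -/
/-!
The constant `2 / π` is the squared amplitude of `√x J₀(x)` at infinity. Rather than deriving the
asymptotics of `J₀`, both bounds are obtained from Legendre polynomials through the Mehler–Heine
limit `Pₙ(cos (x / n)) → J₀(x)` (`tendsto_legQ_bessel`), which follows by dominated convergence from
the expansion of `Pₙ` at `1`.

For even `n`, a Sonin-type monotonicity argument for the Legendre equation gives Bernstein's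
inequality `sin θ · Pₙ(cos θ)² ≤ Pₙ(0)²` on `[0, π/2]` (`sin_mul_legQ_sq_le`). The value `Pₙ(0)` is a
central binomial coefficient, by Rodrigues' formula, so `n Pₙ(0)² → 2 / π` by Wallis' product
(`tendsto_legQ_half`). Taking `θ = x / n` and multiplying by `n` yields `x J₀(x)² ≤ 2 / π`.
A second monotone energy gives `|Pₙ| ≤ 1` (`legQ_sq_le_one`), hence `|J₀| ≤ 1`.

The polynomials are used in the shifted variable `z = (1 - cos θ) / 2 = sin² (θ / 2)`, so that
`z = 0` is `θ = 0` and `z = 1/2` is `θ = π/2`.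
-/

/-- The Bessel function of the first kind of order zero,
`J₀(x) = ∑ (-1)^n (x/2)^(2n) / (n!)²`. -/
noncomputable def besselJ0 (x : ℝ) : ℝ :=
  ∑' n : ℕ, (-1) ^ n * (x / 2) ^ (2 * n) / ((n.factorial : ℝ)) ^ 2

/-! ### Shifted Legendre polynomials -/

open Polynomial in
/-- The shifted Legendre polynomial `z ↦ Pₙ(1 - 2z)`, with real coefficients. -/
noncomputable def legQ (n : ℕ) : ℝ[X] :=
  (shiftedLegendre n).map (Int.castRingHom ℝ)

section
open Polynomial Filter Topology

lemma legQ_coeff (n k : ℕ) :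
    (legQ n).coeff k = (-1) ^ k * n.choose k * (n + k).choose k := by
  rw [legQ, coeff_map, coeff_shiftedLegendre, Nat.choose_symm_add]
  simp

/-- The two-term recurrence equivalent to the Legendre equation. -/
lemma legQ_coeff_succ (n k : ℕ) :
    ((k : ℝ) + 1) ^ 2 * (legQ n).coeff (k + 1)
      = ((k : ℝ) * (k + 1) - n * (n + 1)) * (legQ n).coeff k := by
  simp only [legQ_coeff]
  have h1 : (n.choose (k + 1) : ℝ) * (k + 1) = n.choose k * (n - k) := by
    rcases le_or_gt k n with h | h
    · have := Nat.choose_succ_right_eq n k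
      rw [← Nat.cast_sub h]
      exact_mod_cast this
    · simp [Nat.choose_eq_zero_of_lt h, Nat.choose_eq_zero_of_lt (Nat.lt_succ_of_lt h)]
  have h2 : ((n + (k + 1)).choose (k + 1) : ℝ) * (k + 1) = (n + k + 1) * (n + k).choose k := by
    have := Nat.add_one_mul_choose_eq (n + k) k
    rw [← add_assoc]
    exact_mod_cast this.symm
  linear_combination (-1 : ℝ) ^ (k + 1) * ((n + (k + 1)).choose (k + 1) : ℝ) * (k + 1) * h1
    + (-1 : ℝ) ^ (k + 1) * (n.choose k : ℝ) * (n - k) * h2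

/-- The Legendre equation in the shifted variable. -/
lemma legQ_ode (n : ℕ) :
    X * (1 - X) * derivative (derivative (legQ n)) + (1 - 2 * X) * derivative (legQ n)
      + C ((n : ℝ) * (n + 1)) * legQ n = 0 := by
  have e : X * (1 - X) * derivative (derivative (legQ n)) + (1 - 2 * X) * derivative (legQ n)
      + C ((n : ℝ) * (n + 1)) * legQ n
      = derivative (derivative (legQ n)) * X - derivative (derivative (legQ n)) * X * X
        + derivative (legQ n) - C 2 * (derivative (legQ n) * X)
        + C ((n : ℝ) * (n + 1)) * legQ n := by
    rw [show (C (2 : ℝ)) = 2 from rfl]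
    ring
  rw [e]
  generalize hlam : (n : ℝ) * (n + 1) = lam
  ext k
  rcases k with _ | _ | k
  · have := legQ_coeff_succ n 0
    rw [hlam] at this
    simp [coeff_derivative] at this ⊢
    linear_combination this
  · have := legQ_coeff_succ n 1
    rw [hlam] at this
    simp [coeff_derivative] at this ⊢
    linear_combination this
  · have := legQ_coeff_succ n (k + 2)
    rw [hlam] at this
    simp [coeff_derivative] at this ⊢
    linear_combination this

lemma legQ_ode_eval (n : ℕ) (z : ℝ) :
    z * (1 - z) * (derivative (derivative (legQ n))).eval z
      + (1 - 2 * z) * (derivative (legQ n)).eval z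
      + (n : ℝ) * (n + 1) * (legQ n).eval z = 0 := by
  have := congrArg (eval z) (legQ_ode n)
  simpa using this

lemma legQ_eval_zero (n : ℕ) : (legQ n).eval 0 = 1 := by
  rw [← coeff_zero_eq_eval_zero, legQ_coeff]
  simp

/-! ### Monotone energies and values at the midpoint -/

/-- By the equation, `n(n+1) Q² + z(1-z) Q'²` has derivative `-(1-2z) Q'²`, so it is at most its
value at `0`. -/
lemma legQ_sq_le_one (n : ℕ) (hn : 0 < n) (z : ℝ) (h0 : 0 ≤ z) (h1 : z ≤ 1 / 2) :
    (legQ n).eval z ^ 2 ≤ 1 := by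
  set lam : ℝ := (n : ℝ) * (n + 1) with hlam
  have hlam0 : 0 < lam := by positivity
  let E : ℝ[X] := C lam * legQ n ^ 2 + X * (1 - X) * derivative (legQ n) ^ 2
  have hE : ∀ t, (derivative E).eval t = -(1 - 2 * t) * (derivative (legQ n)).eval t ^ 2 := by
    intro t
    have := legQ_ode_eval n t
    simp [E, derivative_pow]
    linear_combination 2 * (derivative (legQ n)).eval t * this
  have anti : AntitoneOn (fun t => E.eval t) (Set.Icc 0 (1 / 2)) := by
    refine antitoneOn_of_deriv_nonpos (convex_Icc _ _) E.continuousOn E.differentiableOn ?_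
    intro t ht
    rw [interior_Icc] at ht
    rw [Polynomial.deriv, hE]
    have := mul_nonneg (show (0 : ℝ) ≤ 1 - 2 * t by linarith [ht.2])
      (sq_nonneg ((derivative (legQ n)).eval t))
    linarith
  have := anti (Set.mem_Icc.2 ⟨le_rfl, by norm_num⟩) (Set.mem_Icc.2 ⟨h0, h1⟩) h0
  simp [E, legQ_eval_zero] at this
  have h3 : 0 ≤ z * (1 - z) * (derivative (legQ n)).eval z ^ 2 :=
    mul_nonneg (mul_nonneg h0 (by linarith)) (sq_nonneg _)
  nlinarith

lemma legQ_comp (m : ℕ) : (legQ (2 * m)).comp (1 - X) = legQ (2 * m) := by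
  have := congrArg (Polynomial.map (Int.castRingHom ℝ))
    (neg_one_pow_mul_shiftedLegendre_comp_one_sub_X_eq (2 * m))
  simpa [legQ, Polynomial.map_comp] using this

/-- Even-degree Legendre polynomials are even, so their derivative vanishes at the centre. -/
lemma legQ_deriv_half (m : ℕ) : (derivative (legQ (2 * m))).eval (1 / 2) = 0 := by
  have := congrArg (fun p => (derivative p).eval (1 / 2 : ℝ)) (legQ_comp m)
  simp [derivative_comp] at this
  norm_num at this ⊢
  linarith

/-- Rodrigues' formula identifies the central value with the coefficient of `wⁿ` in
`(1/4 - w²)ⁿ`, where `n = 2m`. -/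
lemma legQ_eval_half (m : ℕ) :
    (legQ (2 * m)).eval (1 / 2) = (-1) ^ m * (2 * m).choose m / 4 ^ m := by
  have h := congrArg (Polynomial.map (Int.castRingHom ℝ)) (factorial_mul_shiftedLegendre_eq (2 * m))
  rw [← Polynomial.iterate_derivative_map] at h
  simp only [Polynomial.map_mul, Polynomial.map_pow, Polynomial.map_sub, Polynomial.map_one,
    Polynomial.map_X, Polynomial.map_natCast] at h
  rw [← factorial_smul_hasseDeriv, LinearMap.smul_apply, nsmul_eq_mul] at h
  have h2 : legQ (2 * m) = hasseDeriv (2 * m) (X ^ (2 * m) * (1 - X) ^ (2 * m)) :=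
    mul_left_cancel₀ (Nat.cast_ne_zero.2 (Nat.factorial_ne_zero (2 * m))) h
  rw [h2, ← taylor_coeff, taylor_apply, ← mul_pow, pow_comp]
  have e : (X * (1 - X) : ℝ[X]).comp (X + C (1 / 2)) = expand ℝ 2 (C (1 / 4) - X) := by
    have : (C (1 / 4) : ℝ[X]) = C (1 / 2) * C (1 / 2) := by rw [← C_mul]; norm_num
    have h3 : (1 : ℝ[X]) = C (1 / 2) + C (1 / 2) := by
      rw [← C_add]; norm_num
    simp only [mul_comp, sub_comp, X_comp, one_comp, map_sub, expand_C, expand_X]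
    rw [this, h3]; ring
  rw [e, ← map_pow, mul_comm 2 m, coeff_expand_mul (by norm_num)]
  have e2 : (C (1 / 4) - X : ℝ[X]) = -(X + C (-1 / 4)) := by
    rw [show (-1 / 4 : ℝ) = -(1 / 4) by ring, C_neg]; ring
  rw [e2, mul_comm m 2, Even.neg_pow (by simp), coeff_X_add_C_pow]
  rw [show 2 * m - m = m by omega, show (-1 / 4 : ℝ) = (-1) / 4 by ring, div_pow]
  ring

/-- Sonin's monotonicity argument for the Liouville normal form: `v = √(sin θ) Pₙ(cos θ)` satisfies
`v'' + q v = 0` with `q = (n + 1/2)² + 1 / (4 sin² θ)` decreasing on `(0, π/2]`, so `v² + v'² / q` is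
increasing and `v²` is at most its value at `π/2`. -/
lemma sin_mul_legQ_sq_le (m : ℕ) (θ : ℝ) (h0 : 0 ≤ θ) (h1 : θ ≤ Real.pi / 2) :
    Real.sin θ * (legQ (2 * m)).eval ((1 - Real.cos θ) / 2) ^ 2
      ≤ (legQ (2 * m)).eval (1 / 2) ^ 2 := by
  set n := 2 * m with hn
  set lam : ℝ := (n : ℝ) * (n + 1) with hlam
  have hlam0 : 0 ≤ lam := by positivity
  let a : ℝ → ℝ := fun t => (legQ n).eval ((1 - Real.cos t) / 2)
  let b : ℝ → ℝ := fun t => (derivative (legQ n)).eval ((1 - Real.cos t) / 2)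
  let d : ℝ → ℝ := fun t => (derivative (derivative (legQ n))).eval ((1 - Real.cos t) / 2)
  have hz : ∀ t, HasDerivAt (fun t => (1 - Real.cos t) / 2) (Real.sin t / 2) t := by
    intro t
    simpa using ((Real.hasDerivAt_cos t).const_sub 1).div_const 2
  have ha : ∀ t, HasDerivAt a (b t * (Real.sin t / 2)) t := fun t =>
    ((legQ n).hasDerivAt _).comp t (hz t)
  have hb : ∀ t, HasDerivAt b (d t * (Real.sin t / 2)) t := fun t =>
    ((derivative (legQ n)).hasDerivAt _).comp t (hz t)
  let D : ℝ → ℝ := fun t => (4 * lam + 1) * Real.sin t ^ 2 + 1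
  have hD0 : ∀ t, 0 < D t := fun t => by positivity
  -- In terms of `s = sin θ`: `v' = w / (2 √s)` and `q = D / (4 s²)`, so `v² + v'² / q = F`.
  let w : ℝ → ℝ := fun t => Real.cos t * a t + Real.sin t ^ 2 * b t
  let F : ℝ → ℝ := fun t => Real.sin t * a t ^ 2 + Real.sin t * w t ^ 2 / D t
  have hw : ∀ t, HasDerivAt w
      (Real.sin t * (Real.cos t * b t / 2 - (1 + 2 * lam) * a t)) t := by
    intro t
    have := ((Real.hasDerivAt_cos t).mul (ha t)).add
      (((Real.hasDerivAt_sin t).pow 2).mul (hb t))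
    refine this.congr_deriv ?_
    have ode := legQ_ode_eval n ((1 - Real.cos t) / 2)
    change (1 - Real.cos t) / 2 * (1 - (1 - Real.cos t) / 2) * d t
      + (1 - 2 * ((1 - Real.cos t) / 2)) * b t + lam * a t = 0 at ode
    have hs := Real.sin_sq_add_cos_sq t
    simp
    linear_combination 2 * Real.sin t * ode + Real.sin t * d t / 2 * hs
  have hD : ∀ t, HasDerivAt D ((4 * lam + 1) * (2 * Real.sin t * Real.cos t)) t := by
    intro t
    have := (((Real.hasDerivAt_sin t).pow 2).const_mul (4 * lam + 1)).add_const 1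
    refine this.congr_deriv ?_
    simp
  -- This derivative is `-q' v'² / q²`.
  have hF : ∀ t, HasDerivAt F (2 * Real.cos t * w t ^ 2 / D t ^ 2) t := by
    intro t
    have := ((Real.hasDerivAt_sin t).mul ((ha t).pow 2)).add
      (((Real.hasDerivAt_sin t).mul ((hw t).pow 2)).div (hD t) (hD0 t).ne')
    refine this.congr_deriv ?_
    have hs := Real.sin_sq_add_cos_sq t
    have hDt := (hD0 t).ne'
    simp only [Pi.mul_apply, Pi.pow_apply]
    field_simp
    have hDe : D t = (4 * lam + 1) * Real.sin t ^ 2 + 1 := rfl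
    have hwe : w t = Real.cos t * a t + Real.sin t ^ 2 * b t := rfl
    rw [hDe, hwe]
    push_cast
    norm_num
    grind
  have mono : MonotoneOn F (Set.Icc 0 (Real.pi / 2)) := by
    refine monotoneOn_of_deriv_nonneg (convex_Icc _ _)
      (fun t _ => (hF t).continuousAt.continuousWithinAt)
      (fun t _ => (hF t).differentiableAt.differentiableWithinAt) ?_
    intro t ht
    rw [interior_Icc] at ht
    rw [(hF t).deriv]
    have := Real.cos_nonneg_of_mem_Icc (x := t) ⟨by linarith [ht.1, Real.pi_pos], ht.2.le⟩
    positivity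
  have key := mono (Set.mem_Icc.2 ⟨h0, h1⟩)
    (Set.mem_Icc.2 ⟨by positivity, le_rfl⟩) h1
  have hend : F (Real.pi / 2) = (legQ n).eval (1 / 2) ^ 2 := by
    have := legQ_deriv_half m
    simp only [F, w, a, b, Real.sin_pi_div_two, Real.cos_pi_div_two, sub_zero, hn, this]
    simp
  have hs : 0 ≤ Real.sin θ := Real.sin_nonneg_of_nonneg_of_le_pi h0 (by linarith [Real.pi_pos])
  have : 0 ≤ Real.sin θ * w θ ^ 2 / D θ := by
    have := hD0 θ
    positivity
  rw [hend] at key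
  change Real.sin θ * a θ ^ 2 + _ ≤ _ at key
  change Real.sin θ * a θ ^ 2 ≤ _
  linarith

/-! ### Limits as the degree tends to infinity -/

lemma legQ_half_sq (m : ℕ) (hm : 0 < m) :
    ((2 * m : ℕ) : ℝ) * (legQ (2 * m)).eval (1 / 2) ^ 2
      = (2 * m / (2 * m + 1)) * (Real.Wallis.W m)⁻¹ := by
  rw [legQ_eval_half, Real.Wallis.W_eq_factorial_ratio]
  have : ((2 * m).choose m : ℝ) = (2 * m).factorial / (m.factorial * m.factorial) := by
    rw [Nat.cast_choose ℝ (by omega), show 2 * m - m = m by omega]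
  rw [this]
  have h1 : (m.factorial : ℝ) ≠ 0 := Nat.cast_ne_zero.2 (Nat.factorial_ne_zero m)
  have h4 : (2 : ℝ) ^ (4 * m) = (4 ^ m) ^ 2 := by
    rw [← pow_mul, show (4 : ℝ) = 2 ^ 2 by norm_num, ← pow_mul]; ring_nf
  rw [h4]
  have h5 : (((-1 : ℝ)) ^ m) ^ 2 = 1 := by rw [← pow_mul, mul_comm, pow_mul]; simp
  push_cast
  field_simp
  rw [h5]

lemma tendsto_legQ_half :
    Tendsto (fun m : ℕ => ((2 * m : ℕ) : ℝ) * (legQ (2 * m)).eval (1 / 2) ^ 2) atTop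
      (𝓝 (2 / Real.pi)) := by
  have hW := Real.Wallis.tendsto_W_nhds_pi_div_two.inv₀ (by positivity)
  have h1 : Tendsto (fun m : ℕ => (2 * (m : ℝ) / (2 * m + 1))) atTop (𝓝 1) := by
    have := (tendsto_natCast_div_add_atTop (1 / 2 : ℝ))
    refine this.congr fun m => ?_
    have : (m : ℝ) + 1 / 2 ≠ 0 := by positivity
    field_simp
  have := h1.mul hW
  rw [one_mul, inv_div] at this
  refine this.congr' ?_
  filter_upwards [eventually_gt_atTop 0] with m hm
  exact (legQ_half_sq m hm).symm

lemma tendsto_choose_div_pow (k : ℕ) :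
    Tendsto (fun n : ℕ => (n.choose k : ℝ) / (n : ℝ) ^ k) atTop (𝓝 (1 / k.factorial)) := by
  have h := (isEquivalent_choose k).div
    (Asymptotics.IsEquivalent.refl (u := fun n : ℕ => (n : ℝ) ^ k) (l := atTop))
  refine h.symm.tendsto_nhds (tendsto_const_nhds.congr' ?_)
  filter_upwards [eventually_gt_atTop 0] with n hn
  have : (n : ℝ) ^ k ≠ 0 := by positivity
  simp only [Pi.div_apply]
  field_simp

lemma tendsto_add_choose_div_pow (k : ℕ) :
    Tendsto (fun n : ℕ => ((n + k).choose k : ℝ) / (n : ℝ) ^ k) atTop (𝓝 (1 / k.factorial)) := by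
  have h := (tendsto_choose_div_pow k).comp (tendsto_add_atTop_nat k)
  have h2 : Tendsto (fun n : ℕ => ((n : ℝ) / (n + k)) ^ k) atTop (𝓝 (1 ^ k)) :=
    (tendsto_natCast_div_add_atTop (k : ℝ)).pow k
  have h3 := h.div h2 (by simp)
  rw [one_pow, div_one] at h3
  refine h3.congr' ?_
  filter_upwards [eventually_gt_atTop 0] with n hn
  have : (n : ℝ) ≠ 0 := by positivity
  have h4 : (n : ℝ) + k ≠ 0 := by positivity
  simp only [Pi.div_apply, Function.comp_apply, Nat.cast_add, div_pow]
  field_simp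

lemma legQ_eval_eq_tsum (n : ℕ) (z : ℝ) :
    (legQ n).eval z = ∑' k : ℕ, (-1) ^ k * (n.choose k : ℝ) * (n + k).choose k * z ^ k := by
  have hd : (legQ n).natDegree < n + 1 :=
    Nat.lt_succ_of_le (natDegree_map_le.trans (natDegree_shiftedLegendre n).le)
  rw [eval_eq_sum_range' hd, tsum_eq_sum (s := Finset.range (n + 1))]
  · simp only [legQ_coeff]
  · intro k hk
    rw [Finset.mem_range, not_lt] at hk
    simp [Nat.choose_eq_zero_of_lt (show n < k by omega)]

lemma tendsto_mul_sin_div (c : ℝ) :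
    Tendsto (fun n : ℕ => (n : ℝ) * Real.sin (c / n)) atTop (𝓝 c) := by
  have h : HasDerivAt (fun t => Real.sin (c * t)) c 0 := by
    simpa using ((hasDerivAt_id (0 : ℝ)).const_mul c).sin
  have h2 := h.tendsto_slope_zero_right.comp
    (tendsto_inv_atTop_nhdsGT_zero.comp (tendsto_natCast_atTop_atTop (R := ℝ)))
  refine h2.congr fun n => ?_
  simp [div_eq_mul_inv]

lemma half_one_sub_cos (t : ℝ) : (1 - Real.cos t) / 2 = Real.sin (t / 2) ^ 2 := by
  rw [Real.sin_sq_eq_half_sub]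
  ring_nf

/-- The Mehler–Heine limit `Pₙ(cos (x / n)) → J₀(x)`, by dominated convergence of the expansion at
`z = 0`. -/
lemma tendsto_legQ_bessel (x : ℝ) :
    Tendsto (fun n : ℕ => (legQ n).eval ((1 - Real.cos (x / n)) / 2)) atTop (𝓝 (besselJ0 x)) := by
  simp only [legQ_eval_eq_tsum, half_one_sub_cos]
  unfold besselJ0
  refine tendsto_tsum_of_dominated_convergence
    (bound := fun k => (x ^ 2 / 2) ^ k / k.factorial)
    (Real.summable_pow_div_factorial _) ?_ ?_
  · intro k
    have hs := ((tendsto_mul_sin_div (x / 2)).pow (2 * k))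
    have h := (((tendsto_choose_div_pow k).mul (tendsto_add_choose_div_pow k)).mul hs).const_mul
      ((-1 : ℝ) ^ k)
    have e : (-1 : ℝ) ^ k * (1 / k.factorial * (1 / k.factorial) * (x / 2) ^ (2 * k))
        = (-1) ^ k * (x / 2) ^ (2 * k) / (k.factorial : ℝ) ^ 2 := by
      ring
    rw [e] at h
    refine h.congr' ?_
    filter_upwards [eventually_gt_atTop 0] with n hn
    have hn' : (n : ℝ) ≠ 0 := by positivity
    rw [mul_pow, ← pow_mul, div_right_comm x 2 (n : ℝ), pow_mul (n : ℝ), sq (n : ℝ), mul_pow]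
    field_simp
  · filter_upwards [eventually_gt_atTop 0] with n hn k
    have hn' : (0 : ℝ) < n := by positivity
    rcases lt_or_ge n k with hk | hk
    · rw [Nat.choose_eq_zero_of_lt hk]
      simp
      positivity
    -- For `k ≤ n` the coefficient is at most `(2n²)ᵏ / k!`, while `z ≤ x² / (4n²)`.
    have h1 : (n.choose k : ℝ) ≤ (n : ℝ) ^ k / k.factorial := Nat.choose_le_pow_div k n
    have h2 : ((n + k).choose k : ℝ) ≤ (2 * n : ℝ) ^ k := by
      refine (Nat.choose_le_pow_div (α := ℝ) k (n + k)).trans ?_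
      refine (div_le_self (by positivity) (by exact_mod_cast k.factorial_pos)).trans ?_
      have : (k : ℝ) ≤ n := by exact_mod_cast hk
      push_cast
      gcongr
      linarith
    have h3 : Real.sin (x / n / 2) ^ 2 ≤ (x / n / 2) ^ 2 :=
      sq_le_sq.2 Real.abs_sin_le_abs
    rw [Real.norm_eq_abs, abs_mul, abs_mul, abs_mul, abs_pow, abs_neg, abs_one, one_pow, one_mul,
      Nat.abs_cast, Nat.abs_cast, abs_of_nonneg (a := (_ ^ 2) ^ k) (by positivity)]
    calc (n.choose k : ℝ) * ((n + k).choose k) * (Real.sin (x / n / 2) ^ 2) ^ k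
        ≤ (n : ℝ) ^ k / k.factorial * (2 * n : ℝ) ^ k * ((x / n / 2) ^ 2) ^ k := by gcongr
      _ = (x ^ 2 / 2) ^ k / k.factorial := by
        rw [div_mul_eq_mul_div, div_mul_eq_mul_div, ← mul_pow, ← mul_pow]
        congr 2
        field_simp

/-! ### Passage to the Bessel function -/

lemma besselJ0_abs (x : ℝ) : besselJ0 |x| = besselJ0 x := by
  unfold besselJ0
  congr 1
  ext n
  rw [pow_mul, pow_mul, div_pow |x|, div_pow x, sq_abs]

lemma tendsto_two_mul_atTop : Tendsto (fun m : ℕ => 2 * m) atTop atTop :=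
  tendsto_atTop_mono (fun m => Nat.le_mul_of_pos_left m two_pos) tendsto_id

lemma besselJ0_sq_le_one (x : ℝ) : besselJ0 x ^ 2 ≤ 1 := by
  refine le_of_tendsto ((tendsto_legQ_bessel x).pow 2) ?_
  have h : Tendsto (fun n : ℕ => (1 - Real.cos (x / n)) / 2) atTop (𝓝 0) := by
    have h1 : Tendsto (fun n : ℕ => x / n) atTop (𝓝 0) := tendsto_const_div_atTop_nhds_zero_nat x
    have := ((Real.continuous_cos.tendsto 0).comp h1).const_sub 1 |>.div_const 2
    simpa using this
  filter_upwards [eventually_gt_atTop 0,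
    h.eventually_le_const (show (0 : ℝ) < 1 / 2 by norm_num)] with n hn hz
  exact legQ_sq_le_one n hn _ (by linarith [Real.cos_le_one (x / n)]) hz

lemma mul_besselJ0_sq_le (x : ℝ) (hx : 0 < x) : x * besselJ0 x ^ 2 ≤ 2 / Real.pi := by
  have hl := ((tendsto_mul_sin_div x).mul ((tendsto_legQ_bessel x).pow 2)).comp
    tendsto_two_mul_atTop
  refine le_of_tendsto_of_tendsto hl tendsto_legQ_half ?_
  have h1 : Tendsto (fun m : ℕ => x / ((2 * m : ℕ) : ℝ)) atTop (𝓝 0) :=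
    (tendsto_const_div_atTop_nhds_zero_nat x).comp tendsto_two_mul_atTop
  filter_upwards [h1.eventually_le_const (show (0 : ℝ) < Real.pi / 2 by positivity)] with m hm
  have := sin_mul_legQ_sq_le m (x / ((2 * m : ℕ) : ℝ)) (by positivity) hm
  simp only [Function.comp_apply]
  rw [mul_assoc]
  exact mul_le_mul_of_nonneg_left this (by positivity)

end

theorem besselJ0_abs_bound :
    (∀ x : ℝ, |besselJ0 x| ≤ 1) ∧
    (∀ x : ℝ, x ≠ 0 → |besselJ0 x| ≤ Real.sqrt (2 / (Real.pi * |x|))) := by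
  refine ⟨fun x => (sq_le_one_iff_abs_le_one _).1 (besselJ0_sq_le_one x), fun x hx => ?_⟩
  have hx' : 0 < |x| := abs_pos.2 hx
  have h := mul_besselJ0_sq_le |x| hx'
  rw [besselJ0_abs] at h
  apply Real.abs_le_sqrt
  rw [← div_div, le_div_iff₀ hx', mul_comm]
  exact h
end

section
/- Let λ_n be the coefficients of the power series expansion of log J₀(z) around 0 (valid for |z| < j₀ with j₀ the first positive zero of J₀). Then λ₀ = 0, λ_{2m−1} = 0 for every m ≥ 1, λ₂ = −1/4, and λ_{2m} < 0 for every m ≥ 1. -/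
/-!
The signs come from a Riccati equation rather than from the zeros of `J₀`. Write `C` for the Taylor
series of `J₀` at `0` and `L` for that of `log J₀`, both as formal power series. Bessel's equation
reads `X C'' + C' + X C = 0` (`besselSeries_ode`), and differentiating `J₀ = exp (log J₀)` near `0`
gives `C' = L' C` (`derivative_taylorSeries`, `taylorSeries_mul`). Substituting the second relation
into the first and cancelling `C ≠ 0`, the series `u = L'` satisfies `X u' + X u² + u + X = 0`.

Comparing coefficients, `u₀ = 0` and `(n + 2) u_{n+1} = - ∑_{i+j=n} u_i u_j - [n = 0]`. By strong
induction the even coefficients of `u` vanish (if `i + j` is odd, one of `i`, `j` is even), and the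
odd ones are negative: for even `n = i + j` the terms with `i`, `j` even vanish, and those with `i`,
`j` odd are products of two negative numbers (`riccati_even`, `riccati_odd`). Finally
`u_n = (n + 1) λ_{n+1}`.
-/

/-- The Bessel function of the first kind of order zero, as a function of a
complex variable: `J₀(z) = ∑ (-1)^n (z/2)^(2n) / (n!)²`. -/
noncomputable def besselJ0C (z : ℂ) : ℂ :=
  ∑' n : ℕ, (-1) ^ n * (z / 2) ^ (2 * n) / ((n.factorial : ℂ)) ^ 2

open PowerSeries Filter Topology

/-- The Taylor series at `0` of a complex function, as a formal power series. -/
noncomputable def taylorSeries (f : ℂ → ℂ) : PowerSeries ℂ :=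
  PowerSeries.mk fun n => iteratedDeriv n f 0 / (n.factorial : ℂ)

/-- By uniqueness of power series expansions, a convergent expansion near `0` is the Taylor
series. -/
lemma analyticAt_and_taylorSeries {f : ℂ → ℂ} {a : ℕ → ℂ}
    (h : ∀ᶠ z in 𝓝 (0 : ℂ), HasSum (fun n => a n * z ^ n) (f z)) :
    AnalyticAt ℂ f 0 ∧ taylorSeries f = PowerSeries.mk a := by
  have h1 : HasFPowerSeriesAt f (FormalMultilinearSeries.ofScalars ℂ a) 0 := by
    rw [hasFPowerSeriesAt_iff]
    filter_upwards [h] with z hz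
    simpa [FormalMultilinearSeries.coeff_ofScalars, mul_comm] using hz
  refine ⟨h1.analyticAt, ?_⟩
  have h2 := h1.eq_formalMultilinearSeries h1.analyticAt.hasFPowerSeriesAt
  ext n
  have h3 := congrArg (fun p => FormalMultilinearSeries.coeff p n) h2
  simp only [FormalMultilinearSeries.coeff_ofScalars] at h3
  simp [taylorSeries, h3]

lemma taylorSeries_congr {f g : ℂ → ℂ} (h : f =ᶠ[𝓝 0] g) : taylorSeries f = taylorSeries g := by
  ext n
  simp [taylorSeries, h.iteratedDeriv_eq n]

lemma taylorSeries_mul {f g : ℂ → ℂ} (hf : AnalyticAt ℂ f 0) (hg : AnalyticAt ℂ g 0) :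
    taylorSeries (f * g) = taylorSeries f * taylorSeries g := by
  ext n
  rw [PowerSeries.coeff_mul, Finset.Nat.sum_antidiagonal_eq_sum_range_succ_mk]
  simp only [taylorSeries, PowerSeries.coeff_mk]
  rw [iteratedDeriv_mul hf.contDiffAt hg.contDiffAt, Finset.sum_div]
  refine Finset.sum_congr rfl fun i hi => ?_
  have hin : i ≤ n := Nat.lt_succ_iff.mp (Finset.mem_range.mp hi)
  rw [Nat.cast_choose ℂ hin]
  have h1 : (n.factorial : ℂ) ≠ 0 := by exact_mod_cast n.factorial_ne_zero
  have h2 : (i.factorial : ℂ) ≠ 0 := by exact_mod_cast i.factorial_ne_zero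
  have h3 : ((n - i).factorial : ℂ) ≠ 0 := by exact_mod_cast (n - i).factorial_ne_zero
  field_simp

lemma derivative_taylorSeries (f : ℂ → ℂ) :
    taylorSeries (deriv f) = PowerSeries.derivative ℂ (taylorSeries f) := by
  ext n
  rw [PowerSeries.coeff_derivative]
  simp only [taylorSeries, PowerSeries.coeff_mk]
  rw [iteratedDeriv_succ', Nat.factorial_succ]
  have h1 : (n.factorial : ℂ) ≠ 0 := by exact_mod_cast n.factorial_ne_zero
  have h2 : (n : ℂ) + 1 ≠ 0 := by exact_mod_cast n.succ_ne_zero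
  push_cast
  field_simp

/-- The coefficient of `z ^ n` in `J₀(z)`. -/
noncomputable def besselCoeff (n : ℕ) : ℂ :=
  if Even n then (-1) ^ (n / 2) / (4 ^ (n / 2) * ((n / 2).factorial : ℂ) ^ 2) else 0

lemma besselCoeff_two_mul (k : ℕ) :
    besselCoeff (2 * k) = (-1) ^ k / (4 ^ k * (k.factorial : ℂ) ^ 2) := by
  simp [besselCoeff]

lemma besselCoeff_rec (n : ℕ) : besselCoeff (n + 2) * (n + 2) ^ 2 + besselCoeff n = 0 := by
  rcases Nat.even_or_odd' n with ⟨k, rfl | rfl⟩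
  · rw [show 2 * k + 2 = 2 * (k + 1) by ring, besselCoeff_two_mul, besselCoeff_two_mul,
      Nat.factorial_succ]
    have h1 : (k.factorial : ℂ) ≠ 0 := by exact_mod_cast k.factorial_ne_zero
    have h2 : (k : ℂ) + 1 ≠ 0 := by exact_mod_cast k.succ_ne_zero
    push_cast
    field_simp
    ring
  · have h1 : ¬ Even (2 * k + 1) := by grind
    have h2 : ¬ Even (2 * k + 1 + 2) := by grind
    simp [besselCoeff, h1, h2]

/-- Bessel's equation `x y'' + y' + x y = 0`, for the formal power series of `J₀`. -/
lemma besselSeries_ode :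
    X * PowerSeries.derivative ℂ (PowerSeries.derivative ℂ (PowerSeries.mk besselCoeff)) +
      PowerSeries.derivative ℂ (PowerSeries.mk besselCoeff) +
      X * PowerSeries.mk besselCoeff = 0 := by
  ext n
  cases n with
  | zero =>
    simp only [map_add, PowerSeries.coeff_zero_X_mul, PowerSeries.coeff_derivative,
      PowerSeries.coeff_mk]
    simp [besselCoeff]
  | succ n =>
    simp only [map_add, PowerSeries.coeff_succ_X_mul, PowerSeries.coeff_derivative,
      PowerSeries.coeff_mk, map_zero]
    have := besselCoeff_rec n
    push_cast
    linear_combination this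

lemma hasSum_besselJ0C (z : ℂ) : HasSum (fun n => besselCoeff n * z ^ n) (besselJ0C z) := by
  have hs : Summable fun n : ℕ =>
      (-1 : ℂ) ^ n * (z / 2) ^ (2 * n) / ((n.factorial : ℂ)) ^ 2 := by
    refine Summable.of_norm_bounded (Real.summable_pow_div_factorial (‖z / 2‖ ^ 2)) fun n => ?_
    have h1 : (1 : ℝ) ≤ n.factorial := by exact_mod_cast n.factorial_pos
    simp only [norm_div, norm_mul, norm_pow, norm_neg, norm_one, one_pow, one_mul,
      Complex.norm_natCast, ← pow_mul]
    gcongr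
    nlinarith
  have hinj : Function.Injective fun k : ℕ => 2 * k := fun a b h => by simpa using h
  rw [← hinj.hasSum_iff]
  · convert! hs.hasSum using 2 with k
    simp only [Function.comp, besselCoeff_two_mul]
    rw [div_pow, pow_mul 2 2]
    norm_num
    field_simp
  · intro n hn
    have : ¬ Even n := fun ⟨k, hk⟩ => hn ⟨k, by simp only; omega⟩
    simp [besselCoeff, this]

lemma besselJ0C_zero : besselJ0C 0 = 1 := by
  refine (hasSum_besselJ0C 0).unique ?_
  convert! hasSum_single (f := fun n => besselCoeff n * (0 : ℂ) ^ n) 0 ?_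
  · simp [besselCoeff]
  · intro n hn
    simp [hn]

/-- A solution `C` of Bessel's equation with `C' = u C` has a logarithmic derivative `u` that
satisfies the associated Riccati equation. -/
lemma riccati_of_ode {C u : PowerSeries ℂ} (hC : C ≠ 0)
    (ode : X * PowerSeries.derivative ℂ (PowerSeries.derivative ℂ C) +
      PowerSeries.derivative ℂ C + X * C = 0)
    (hu : PowerSeries.derivative ℂ C = u * C) :
    X * PowerSeries.derivative ℂ u + X * (u * u) + u + X = 0 := by
  refine (mul_eq_zero.mp ?_).resolve_right hC
  rw [hu, Derivation.leibniz, hu] at ode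
  simp only [smul_eq_mul] at ode
  linear_combination ode

lemma riccati_even {u : ℕ → ℝ} (h0 : u 0 = 0)
    (hrec : ∀ n, (n + 2) * u (n + 1) + ∑ p ∈ Finset.HasAntidiagonal.antidiagonal n, u p.1 * u p.2 +
      (if n = 0 then 1 else 0) = 0) (n : ℕ) (hn : Even n) : u n = 0 := by
  induction n using Nat.strong_induction_on with
  | _ n ih =>
    cases n with
    | zero => exact h0
    | succ n =>
      have h := hrec n
      have hn0 : n ≠ 0 := by grind
      have hsum : ∑ p ∈ Finset.HasAntidiagonal.antidiagonal n, u p.1 * u p.2 = 0 := by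
        refine Finset.sum_eq_zero fun p hp => ?_
        rw [Finset.HasAntidiagonal.mem_antidiagonal] at hp
        rcases Nat.even_or_odd p.1 with h1 | h1
        · rw [ih p.1 (by omega) h1, zero_mul]
        · rw [ih p.2 (by omega) (by grind), mul_zero]
      rw [hsum, if_neg hn0, add_zero, add_zero] at h
      exact (mul_eq_zero.mp h).resolve_left (by positivity)

lemma riccati_odd {u : ℕ → ℝ} (h0 : u 0 = 0)
    (hrec : ∀ n, (n + 2) * u (n + 1) + ∑ p ∈ Finset.HasAntidiagonal.antidiagonal n, u p.1 * u p.2 +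
      (if n = 0 then 1 else 0) = 0) (n : ℕ) (hn : Odd n) : u n < 0 := by
  induction n using Nat.strong_induction_on with
  | _ n ih =>
    cases n with
    | zero => simp at hn
    | succ n =>
      have h := hrec n
      have hnonneg : ∀ p ∈ Finset.HasAntidiagonal.antidiagonal n, 0 ≤ u p.1 * u p.2 := by
        intro p hp
        rw [Finset.HasAntidiagonal.mem_antidiagonal] at hp
        rcases Nat.even_or_odd p.1 with h1 | h1
        · rw [riccati_even h0 hrec p.1 h1, zero_mul]
        · exact (mul_pos_of_neg_of_neg (ih p.1 (by omega) h1)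
            (ih p.2 (by grind) (by grind))).le
      have hpos : 0 < ∑ p ∈ Finset.HasAntidiagonal.antidiagonal n, u p.1 * u p.2 +
          (if n = 0 then 1 else 0 : ℝ) := by
        by_cases hn0 : n = 0
        · have := Finset.sum_nonneg hnonneg
          rw [if_pos hn0]
          linarith
        · rw [if_neg hn0, add_zero]
          -- The splitting `n = 1 + (n - 1)` has both parts odd, so its term is strictly positive.
          refine Finset.sum_pos' hnonneg ⟨(1, n - 1), ?_, ?_⟩
          · rw [Finset.HasAntidiagonal.mem_antidiagonal]
            simp only
            omega
          · exact mul_pos_of_neg_of_neg (ih 1 (by omega) (by decide))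
              (ih (n - 1) (by omega) (by grind))
      have hn2 : (0 : ℝ) < n + 2 := by positivity
      by_contra! hcon
      have := mul_nonneg hn2.le hcon
      linarith

theorem log_besselJ0_coefficients (l : ℕ → ℝ) (r : ℝ) (hr : 0 < r)
    (hl : ∀ z : ℂ, ‖z‖ < r →
      HasSum (fun n : ℕ => (l n : ℂ) * z ^ n) (Complex.log (besselJ0C z))) :
    l 0 = 0 ∧ (∀ m : ℕ, 1 ≤ m → l (2 * m - 1) = 0) ∧ l 2 = -(1 / 4) ∧
      (∀ m : ℕ, 1 ≤ m → l (2 * m) < 0) := by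
  set f : ℂ → ℂ := fun z => Complex.log (besselJ0C z) with hf
  obtain ⟨hJa, hJT⟩ := analyticAt_and_taylorSeries
    (Eventually.of_forall hasSum_besselJ0C : ∀ᶠ z in 𝓝 (0 : ℂ), _)
  obtain ⟨hfa, hfT⟩ := analyticAt_and_taylorSeries (f := f) (a := fun n => (l n : ℂ)) (by
    filter_upwards [Metric.ball_mem_nhds (0 : ℂ) hr] with z hz
    exact hl z (by simpa using hz))
  have hl0 : l 0 = 0 := by
    have h1 := congrArg (PowerSeries.coeff 0) hfT
    simp only [taylorSeries, PowerSeries.coeff_mk, hf] at h1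
    simp only [iteratedDeriv_zero, besselJ0C_zero, Complex.log_one, zero_div] at h1
    exact_mod_cast h1.symm
  have hne : ∀ᶠ z in 𝓝 (0 : ℂ), besselJ0C z ≠ 0 :=
    hJa.continuousAt.eventually_ne (by simp [besselJ0C_zero])
  have hexp : besselJ0C =ᶠ[𝓝 0] fun z => Complex.exp (f z) := by
    filter_upwards [hne] with z hz
    exact (Complex.exp_log hz).symm
  have hderiv : deriv besselJ0C =ᶠ[𝓝 0] deriv f * besselJ0C := by
    filter_upwards [hexp.eventuallyEq_nhds, hfa.eventually_analyticAt] with z hz hza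
    rw [hz.deriv_eq, hza.differentiableAt.hasDerivAt.cexp.deriv, Pi.mul_apply, hz.eq_of_nhds,
      mul_comm]
  have hu : PowerSeries.derivative ℂ (PowerSeries.mk besselCoeff) =
      PowerSeries.derivative ℂ (PowerSeries.mk fun n => (l n : ℂ)) *
        PowerSeries.mk besselCoeff := by
    rw [← hJT, ← hfT, ← derivative_taylorSeries, ← derivative_taylorSeries,
      taylorSeries_congr hderiv, taylorSeries_mul hfa.deriv hJa]
  have hC : PowerSeries.mk besselCoeff ≠ 0 := fun h => by
    have := congrArg (PowerSeries.coeff 0) h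
    simp [besselCoeff] at this
  have hR := riccati_of_ode hC besselSeries_ode hu
  let u : ℕ → ℝ := fun n => l (n + 1) * (n + 1)
  have h0 : u 0 = 0 := by
    have h1 := congrArg (PowerSeries.coeff 0) hR
    simp only [map_add, PowerSeries.coeff_zero_X_mul, PowerSeries.coeff_derivative,
      PowerSeries.coeff_mk, PowerSeries.coeff_zero_X] at h1
    simp at h1
    simpa [u] using h1
  have hrec : ∀ n : ℕ, (n + 2) * u (n + 1) + ∑ p ∈ Finset.HasAntidiagonal.antidiagonal n, u p.1 * u p.2 +
      (if n = 0 then 1 else 0) = 0 := by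
    intro n
    have h1 := congrArg (PowerSeries.coeff (n + 1)) hR
    simp only [map_add, PowerSeries.coeff_succ_X_mul, map_zero] at h1
    simp only [PowerSeries.coeff_derivative, PowerSeries.coeff_mk, PowerSeries.coeff_mul,
      PowerSeries.coeff_X, Nat.add_eq_right] at h1
    apply Complex.ofReal_injective
    simp only [u, apply_ite Complex.ofReal, Complex.ofReal_add]
    push_cast at h1 ⊢
    linear_combination h1
  refine ⟨hl0, fun m hm => ?_, ?_, fun m hm => ?_⟩
  · obtain ⟨k, rfl⟩ : ∃ k, m = k + 1 := ⟨m - 1, by omega⟩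
    have h1 := riccati_even h0 hrec (2 * k) (by simp)
    simp only [u] at h1
    rw [show 2 * (k + 1) - 1 = 2 * k + 1 by omega]
    exact (mul_eq_zero.mp h1).resolve_right (by positivity)
  · have h1 := hrec 0
    simp [h0] at h1
    simp [u] at h1
    norm_num at h1
    linarith
  · obtain ⟨k, rfl⟩ : ∃ k, m = k + 1 := ⟨m - 1, by omega⟩
    have h1 := riccati_odd h0 hrec (2 * k + 1) (by simp)
    simp only [u] at h1
    rw [show 2 * (k + 1) = 2 * k + 1 + 1 by omega]
    exact (neg_iff_pos_of_mul_neg h1).mpr (by positivity)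
end
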